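/- arXiv:2501.04723 — 2 statements merged into one kernel-verified Lean document; each statement's English description precedes it below -/
import Mathlib

section
/- Let (X,d) be a semimetric space with a triangle function Φ satisfying Condition (1) and Condition (2). Let (x_n), n = 0,1,2,…, be a sequence in X for which there exists α ∈ [0,1) such that d(x_n, x_{n+1}) ≤ α·d(x_{n-1}, x_n) for all n ≥ 1. Then (x_n) is a Cauchy sequence; moreover, for all n and all positive integers p, d(x_n, x_{n+p}) ≤ α^n·C(α)·d(x_0, x_1), where C(α) is the constant from Condition (2). -/
/-!
The distance `d (x n) (x (n + p))` is bounded by `nestPhi Φ α n p * d (x 0) (x 1)`: the generalized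
triangle inequality through `x (n + 1)`, the geometric decay of consecutive distances and
homogeneity of `Φ` reproduce exactly the recursion defining `nestPhi` (`dist_le_nestPhi`).
Homogeneity also gives `nestPhi Φ α n p = α ^ n * nestPhi Φ α 0 p` (`nestPhi_add`), so the second
condition yields the bound `α ^ n * C α * d (x 0) (x 1)`, which tends to `0` uniformly in `p`.

Because `nestPhi Φ α n p` ends in the extra term `α ^ (n + p)`, corresponding to a step of length
zero, the case `p = 1` needs no separate argument that `1 ≤ C α`.
-/

open NNReal Filter Topology

/-- A semimetric on `X`: `d x y = 0` iff `x = y`, and `d` is symmetric. -/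
def IsSemimetric {X : Type*} (d : X → X → ℝ≥0) : Prop :=
  (∀ x y, d x y = 0 ↔ x = y) ∧ (∀ x y, d x y = d y x)

/-- `Φ` is a triangle function for the semimetric `d`: symmetric, nondecreasing in both
arguments, `Φ 0 0 = 0`, and the generalized triangle inequality holds. -/
def IsTriangleFn {X : Type*} (d : X → X → ℝ≥0) (Φ : ℝ≥0 → ℝ≥0 → ℝ≥0) : Prop :=
  (∀ u v, Φ u v = Φ v u) ∧
  (∀ u₁ u₂ v₁ v₂, u₁ ≤ u₂ → v₁ ≤ v₂ → Φ u₁ v₁ ≤ Φ u₂ v₂) ∧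
  Φ 0 0 = 0 ∧
  (∀ x y z : X, d x y ≤ Φ (d x z) (d z y))

/-- Condition (1): `Φ (k*u) (k*v) = k * Φ u v`. -/
def Cond1 (Φ : ℝ≥0 → ℝ≥0 → ℝ≥0) : Prop :=
  ∀ k u v : ℝ≥0, Φ (k * u) (k * v) = k * Φ u v

/-- `nestPhi Φ a k m` is `Φ (a^k, Φ (a^(k+1), …, Φ (a^(k+m-1), a^(k+m))))`;
in particular `nestPhi Φ a 0 p = Φ (1, Φ (a, Φ (a², …, Φ (a^(p-1), a^p))))`. -/
def nestPhi (Φ : ℝ≥0 → ℝ≥0 → ℝ≥0) (a : ℝ≥0) : ℕ → ℕ → ℝ≥0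
  | k, 0 => a ^ k
  | k, m + 1 => Φ (a ^ k) (nestPhi Φ a (k + 1) m)

/-- Condition (2): for every `a ∈ [0,1)` there is `C(a) > 0` bounding all nested expressions. -/
def Cond2 (Φ : ℝ≥0 → ℝ≥0 → ℝ≥0) : Prop :=
  ∀ a : ℝ≥0, a < 1 → ∃ C : ℝ≥0, 0 < C ∧ ∀ p : ℕ, 1 ≤ p → nestPhi Φ a 0 p ≤ C

/-- `(x n)` is a Cauchy sequence for the semimetric `d`. -/
def IsCauchySeq {X : Type*} (d : X → X → ℝ≥0) (x : ℕ → X) : Prop :=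
  ∀ ε : ℝ≥0, 0 < ε → ∃ N : ℕ, ∀ m n : ℕ, N ≤ m → N ≤ n → d (x m) (x n) < ε

/-- The semimetric space `(X, d)` is complete: every Cauchy sequence has a limit. -/
def IsCompleteSemimetric {X : Type*} (d : X → X → ℝ≥0) : Prop :=
  ∀ x : ℕ → X, IsCauchySeq d x → ∃ x₀ : X, Tendsto (fun n => d (x n) x₀) atTop (𝓝 0)

theorem nestPhi_add {Φ : ℝ≥0 → ℝ≥0 → ℝ≥0} (h1 : Cond1 Φ) (a : ℝ≥0) (j m : ℕ) :
    ∀ k, nestPhi Φ a (j + k) m = a ^ j * nestPhi Φ a k m := by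
  induction m with
  | zero => intro k; simp only [nestPhi, pow_add]
  | succ m ih =>
    intro k
    simp only [nestPhi]
    rw [add_assoc, ih, pow_add, h1]

theorem consecutive_dist_le {X : Type*} {d : X → X → ℝ≥0} {x : ℕ → X} {α : ℝ≥0}
    (hx : ∀ n : ℕ, d (x (n + 1)) (x (n + 2)) ≤ α * d (x n) (x (n + 1))) (n : ℕ) :
    d (x n) (x (n + 1)) ≤ α ^ n * d (x 0) (x 1) := by
  induction n with
  | zero => simp
  | succ n ih =>
    calc d (x (n + 1)) (x (n + 2)) ≤ α * d (x n) (x (n + 1)) := hx n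
      _ ≤ α * (α ^ n * d (x 0) (x 1)) := by gcongr
      _ = α ^ (n + 1) * d (x 0) (x 1) := by ring

theorem dist_le_nestPhi {X : Type*} {d : X → X → ℝ≥0} {Φ : ℝ≥0 → ℝ≥0 → ℝ≥0}
    (hd : IsSemimetric d) (hΦ : IsTriangleFn d Φ) (h1 : Cond1 Φ) {x : ℕ → X} {α : ℝ≥0}
    (hx : ∀ n : ℕ, d (x (n + 1)) (x (n + 2)) ≤ α * d (x n) (x (n + 1))) (p : ℕ) :
    ∀ n, d (x n) (x (n + p)) ≤ nestPhi Φ α n p * d (x 0) (x 1) := by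
  induction p with
  | zero =>
    intro n
    rw [add_zero, (hd.1 _ _).2 rfl]
    exact zero_le
  | succ p ih =>
    intro n
    have h := ih (n + 1)
    rw [add_assoc, add_comm 1 p] at h
    calc d (x n) (x (n + (p + 1)))
        ≤ Φ (d (x n) (x (n + 1))) (d (x (n + 1)) (x (n + (p + 1)))) := hΦ.2.2.2 _ _ _
      _ ≤ Φ (d (x 0) (x 1) * α ^ n) (d (x 0) (x 1) * nestPhi Φ α (n + 1) p) :=
          hΦ.2.1 _ _ _ _ ((consecutive_dist_le hx n).trans_eq (mul_comm _ _))
            (h.trans_eq (mul_comm _ _))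
      _ = nestPhi Φ α n (p + 1) * d (x 0) (x 1) := by
          rw [h1, mul_comm]; rfl

theorem stmt_0 {X : Type*} (d : X → X → ℝ≥0) (Φ : ℝ≥0 → ℝ≥0 → ℝ≥0)
    (hd : IsSemimetric d) (hΦ : IsTriangleFn d Φ) (h1 : Cond1 Φ)
    (C : ℝ≥0 → ℝ≥0)
    (h2 : ∀ a : ℝ≥0, a < 1 → 0 < C a ∧ ∀ p : ℕ, 1 ≤ p → nestPhi Φ a 0 p ≤ C a)
    (x : ℕ → X) (α : ℝ≥0) (hα : α < 1)
    (hx : ∀ n : ℕ, d (x (n + 1)) (x (n + 2)) ≤ α * d (x n) (x (n + 1))) :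
    IsCauchySeq d x ∧
      ∀ n p : ℕ, 1 ≤ p → d (x n) (x (n + p)) ≤ α ^ n * C α * d (x 0) (x 1) := by
  have bound : ∀ n p : ℕ, 1 ≤ p → d (x n) (x (n + p)) ≤ α ^ n * C α * d (x 0) (x 1) := by
    intro n p hp
    refine (dist_le_nestPhi hd hΦ h1 hx p n).trans ?_
    have h := nestPhi_add h1 α n p 0
    rw [add_zero] at h
    rw [h]
    have := (h2 α hα).2 p hp
    gcongr
  refine ⟨?_, bound⟩
  intro ε hε
  have lim : Tendsto (fun n : ℕ => α ^ n * C α * d (x 0) (x 1)) atTop (𝓝 0) := by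
    have h := ((NNReal.tendsto_pow_atTop_nhds_zero_of_lt_one hα).mul_const (C α)).mul_const
      (d (x 0) (x 1))
    simpa using h
  obtain ⟨N, hN⟩ := eventually_atTop.1 (lim.eventually (gt_mem_nhds hε))
  have key : ∀ m n : ℕ, N ≤ m → m ≤ n → d (x m) (x n) < ε := by
    intro m n hm hmn
    obtain ⟨p, rfl⟩ := Nat.exists_eq_add_of_le hmn
    rcases Nat.eq_zero_or_pos p with rfl | hp
    · rw [add_zero, (hd.1 _ _).2 rfl]
      exact hε
    · exact (bound m p hp).trans_lt (hN m hm)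
  refine ⟨N, fun m n hm hn => ?_⟩
  rcases le_total m n with h | h
  · exact key m n hm h
  · rw [hd.2]
    exact key n m hn h
end

section
/- Let (X,d) be a semimetric space with at least 3 points and with a triangle function Φ continuous at (0,0), and let T : X → X be a mapping contracting perimeters of triangles on X. Then T is continuous: for every x_0 ∈ X and every sequence (x_n) with d(x_n, x_0) → 0, one has d(Tx_n, Tx_0) → 0. -/
/-!
Write `u n = d (x n) x₀`. The claim follows by squeezing from the bound
`d (T (x n)) (T x₀) ≤ u n + (u n + Φ (u n) (u n))`, valid for all large `n`, whose right-hand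
side tends to `0` by continuity of `Φ` at the origin. If `x₀` is isolated, then `x n = x₀` for
large `n` and the left-hand side vanishes. Otherwise, whenever `x n ≠ x₀`, there is a point
`z ≠ x₀` strictly closer to `x₀` than `x n` is; the points `x n`, `x₀`, `z` are then pairwise
distinct, and contraction of the perimeter of this triangle gives the bound.
-/

open NNReal Filter Topology

/-- `T` is a mapping contracting perimeters of triangles on `(X, d)`: there is `α ∈ [0,1)`
such that the perimeter inequality holds for all pairwise distinct points. -/
def ContractsPerimeters {X : Type*} (d : X → X → ℝ≥0) (T : X → X) : Prop :=
  ∃ α : ℝ≥0, α < 1 ∧ ∀ x y z : X, x ≠ y → y ≠ z → x ≠ z →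
    d (T x) (T y) + d (T y) (T z) + d (T x) (T z) ≤ α * (d x y + d y z + d x z)

theorem stmt_18 {X : Type*} (d : X → X → ℝ≥0) (Φ : ℝ≥0 → ℝ≥0 → ℝ≥0)
    (hcard : ∃ a b c : X, a ≠ b ∧ b ≠ c ∧ a ≠ c)
    (hd : IsSemimetric d) (hΦ : IsTriangleFn d Φ)
    (hΦcont : ContinuousAt (fun p : ℝ≥0 × ℝ≥0 => Φ p.1 p.2) (0, 0))
    (T : X → X) (hT : ContractsPerimeters d T) :
    ∀ (x₀ : X) (x : ℕ → X),
      Tendsto (fun n => d (x n) x₀) atTop (𝓝 0) →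
        Tendsto (fun n => d (T (x n)) (T x₀)) atTop (𝓝 0) := by
  obtain ⟨hzero, hsymm⟩ := hd
  obtain ⟨-, hmono, hΦ0, htri⟩ := hΦ
  obtain ⟨α, hα, hT⟩ := hT
  intro x₀ x hx
  have hΦx : Tendsto (fun n => Φ (d (x n) x₀) (d (x n) x₀)) atTop (𝓝 0) := by
    have h := hΦcont.tendsto.comp (hx.prodMk_nhds hx)
    simpa only [Function.comp_def, hΦ0] using h
  have hbound : Tendsto (fun n => d (x n) x₀ + (d (x n) x₀ + Φ (d (x n) x₀) (d (x n) x₀)))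
      atTop (𝓝 0) := by
    simpa using hx.add (hx.add hΦx)
  refine tendsto_of_tendsto_of_tendsto_of_le_of_le' tendsto_const_nhds hbound
    (Eventually.of_forall fun n => zero_le) ?_
  have hself : ∀ y, y = x₀ → d (T y) (T x₀) = 0 := by
    rintro y rfl
    exact (hzero _ _).2 rfl
  by_cases hiso : ∃ r : ℝ≥0, 0 < r ∧ ∀ y, d y x₀ < r → y = x₀
  · obtain ⟨r, hr, hball⟩ := hiso
    filter_upwards [hx.eventually_lt_const hr] with n hn
    rw [hself _ (hball _ hn)]
    exact zero_le
  · push Not at hiso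
    refine Eventually.of_forall fun n => ?_
    by_cases hn : x n = x₀
    · rw [hself _ hn]
      exact zero_le
    obtain ⟨z, hz, hz0⟩ := hiso (d (x n) x₀) (pos_iff_ne_zero.2 fun h => hn ((hzero _ _).1 h))
    have hxz : x n ≠ z := by
      intro h
      rw [h] at hz
      exact lt_irrefl _ hz
    have hside : d x₀ z ≤ d (x n) x₀ := by
      rw [hsymm]
      exact hz.le
    calc d (T (x n)) (T x₀)
        ≤ d (T (x n)) (T x₀) + d (T x₀) (T z) + d (T (x n)) (T z) := by
          rw [add_assoc]
          exact le_self_add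
      _ ≤ α * (d (x n) x₀ + d x₀ z + d (x n) z) := hT _ _ _ hn hz0.symm hxz
      _ ≤ d (x n) x₀ + d x₀ z + d (x n) z := mul_le_of_le_one_left zero_le hα.le
      _ ≤ d (x n) x₀ + (d (x n) x₀ + Φ (d (x n) x₀) (d (x n) x₀)) := by
          rw [add_assoc]
          gcongr
          exact (htri _ _ x₀).trans (hmono _ _ _ _ le_rfl hside)
end
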